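/- Let $n$ be a positive integer, $1<\alpha,\beta<\infty$ and $0<p\leqslant q<\infty$, and let $\mathbf{r}=(r_1,\dots,r_n)$ with $0\leqslant r_i<1$. If for every function $f$ analytic on the polydisc $\mathbb{D}^n$ one has $\|\mathbf{T}_{\mathbf{r}}f\|_{A_\beta^q(\mathbb{D}^n)}\leqslant\|f\|_{A_\alpha^p(\mathbb{D}^n)}$, then $r_i^2\leqslant\beta p/(\alpha q)$ for every $i=1,\dots,n$. -/

import Mathlib

open MeasureTheory Metric

/-- The weighted Bergman measure `dA_α(z) = (α-1)(1-|z|²)^(α-2) dA(z)` on the unit disk,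
where `dA = dx dy / π` is the normalized area measure. -/
noncomputable def bergmanMeasure (α : ℝ) : Measure ℂ :=
  ((volume : Measure ℂ).restrict (ball (0 : ℂ) 1)).withDensity
    fun z => ENNReal.ofReal ((α - 1) * (1 - ‖z‖ ^ 2) ^ (α - 2) / Real.pi)

/-- The product Bergman measure `dA_α(z₁) ⋯ dA_α(zₙ)` on the polydisc. -/
noncomputable def bergmanMeasurePi (n : ℕ) (α : ℝ) : Measure (Fin n → ℂ) :=
  Measure.pi fun _ => bergmanMeasure α

open Set Filter Topology

/-- The integral of a function against the Bergman measure, written as a weighted area integral. -/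
theorem integral_bergmanMeasure {α : ℝ} (hα : 1 < α) (g : ℂ → ℝ) :
    ∫ z, g z ∂(bergmanMeasure α) =
      ∫ z in ball (0 : ℂ) 1, (α - 1) * (1 - ‖z‖ ^ 2) ^ (α - 2) / Real.pi * g z := by
  rw [bergmanMeasure, integral_withDensity_eq_integral_toReal_smul (by fun_prop) (by simp)]
  refine setIntegral_congr_fun measurableSet_ball fun z hz => ?_
  have hz1 : ‖z‖ < 1 := by simpa using hz
  have : 0 ≤ 1 - ‖z‖ ^ 2 := by nlinarith [norm_nonneg z]
  have : 0 ≤ α - 1 := by linarith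
  have h : 0 ≤ (α - 1) * (1 - ‖z‖ ^ 2) ^ (α - 2) / Real.pi := by positivity
  simp only [smul_eq_mul, ENNReal.toReal_ofReal h]

/-- Integration in polar coordinates of a radial function against the Bergman measure. -/
theorem integral_bergmanMeasure_norm {α : ℝ} (hα : 1 < α) (g : ℝ → ℝ) :
    ∫ z, g ‖z‖ ∂(bergmanMeasure α) =
      ∫ y in (0 : ℝ)..1, 2 * y * ((α - 1) * (1 - y ^ 2) ^ (α - 2)) * g y := by
  rw [integral_bergmanMeasure hα, ← integral_indicator measurableSet_ball]
  set F : ℝ → ℝ := (Iio 1).indicator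
    fun y => (α - 1) * (1 - y ^ 2) ^ (α - 2) / Real.pi * g y with hF
  have h1 : ∀ z : ℂ, (ball (0 : ℂ) 1).indicator
      (fun z => (α - 1) * (1 - ‖z‖ ^ 2) ^ (α - 2) / Real.pi * g ‖z‖) z = F ‖z‖ := by
    intro z
    simp [hF, indicator]
  simp_rw [h1]
  rw [integral_fun_norm_addHaar, intervalIntegral.integral_of_le zero_le_one,
    integral_Ioc_eq_integral_Ioo]
  have h2 : ∀ y : ℝ, y ^ (Module.finrank ℝ ℂ - 1) • F y = (Iio 1).indicator
      (fun y => y * ((α - 1) * (1 - y ^ 2) ^ (α - 2) / Real.pi * g y)) y := by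
    intro y
    by_cases h : y < 1 <;> simp [hF, h]
  simp_rw [h2]
  rw [setIntegral_indicator measurableSet_Iio, Ioi_inter_Iio, nsmul_eq_mul, smul_eq_mul,
    ← integral_const_mul, ← integral_const_mul]
  refine setIntegral_congr_fun measurableSet_Ioo fun y _ => ?_
  have : (volume : Measure ℂ).real (ball 0 1) = Real.pi := by
    simp [Measure.real, Complex.volume_ball]
  simp only [this, Complex.finrank_real_complex]
  field_simp
  push_cast
  ring

theorem hasDerivAt_one_sub_sq_rpow (s : ℝ) {y : ℝ} (hy : y ∈ Ioo (0 : ℝ) 1) :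
    HasDerivAt (fun y : ℝ => (1 - y ^ 2) ^ s) (-(2 * y) * s * (1 - y ^ 2) ^ (s - 1)) y := by
  have h : HasDerivAt (fun y : ℝ => 1 - y ^ 2) (-(2 * y)) y := by
    simpa using (hasDerivAt_pow 2 y).const_sub 1
  exact h.rpow_const (Or.inl (by nlinarith [hy.1, hy.2]))

theorem integral_one_bergmanMeasure {α : ℝ} (hα : 1 < α) :
    ∫ _, (1 : ℝ) ∂(bergmanMeasure α) = 1 := by
  rw [integral_bergmanMeasure_norm hα fun _ => 1]
  have hc : ContinuousOn (fun y : ℝ => -(1 - y ^ 2) ^ (α - 1)) (Icc 0 1) :=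
    ((by fun_prop : Continuous fun y : ℝ => 1 - y ^ 2).rpow_const
      fun _ => Or.inr (by linarith)).neg.continuousOn
  have hd : ∀ y ∈ Ioo (0 : ℝ) 1, HasDerivAt (fun y : ℝ => -(1 - y ^ 2) ^ (α - 1))
      (2 * y * ((α - 1) * (1 - y ^ 2) ^ (α - 2)) * 1) y := fun y hy =>
    (hasDerivAt_one_sub_sq_rpow (α - 1) hy).neg.congr_deriv (by ring_nf)
  rw [intervalIntegral.integral_eq_sub_of_hasDerivAt_of_le zero_le_one hc hd]
  · simp [Real.zero_rpow (by linarith : α - 1 ≠ 0)]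
  · rw [intervalIntegrable_iff_integrableOn_Ioc_of_le zero_le_one]
    refine intervalIntegral.integrableOn_deriv_of_nonneg hc hd fun y hy => ?_
    have h0 := hy.1
    have : 0 ≤ 1 - y ^ 2 := by nlinarith [hy.1, hy.2]
    have : 0 ≤ α - 1 := by linarith
    positivity

theorem integral_norm_sq_bergmanMeasure {α : ℝ} (hα : 1 < α) :
    ∫ z, ‖z‖ ^ 2 ∂(bergmanMeasure α) = 1 / α := by
  rw [integral_bergmanMeasure_norm hα fun y => y ^ 2]
  set G : ℝ → ℝ := fun y => -(1 - y ^ 2) ^ (α - 1) + (α - 1) / α * (1 - y ^ 2) ^ α with hG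
  have hα0 : α ≠ 0 := by linarith
  have hb : Continuous fun y : ℝ => 1 - y ^ 2 := by fun_prop
  have hc : ContinuousOn G (Icc 0 1) :=
    ((hb.rpow_const fun _ => Or.inr (by linarith)).neg.add
      ((hb.rpow_const fun _ => Or.inr (by linarith)).const_mul _)).continuousOn
  have hd : ∀ y ∈ Ioo (0 : ℝ) 1, HasDerivAt G
      (2 * y * ((α - 1) * (1 - y ^ 2) ^ (α - 2)) * y ^ 2) y := by
    intro y hy
    have hpos : 0 < 1 - y ^ 2 := by nlinarith [hy.1, hy.2]
    refine ((hasDerivAt_one_sub_sq_rpow (α - 1) hy).neg.add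
      ((hasDerivAt_one_sub_sq_rpow α hy).const_mul _)).congr_deriv ?_
    have e1 : α - 1 = (α - 2) + 1 := by ring
    have e2 : (1 - y ^ 2) ^ (α - 1) = (1 - y ^ 2) ^ (α - 2) * (1 - y ^ 2) := by
      rw [e1, Real.rpow_add_one hpos.ne']
    have e3 : α - 1 - 1 = α - 2 := by ring
    rw [e3, e2]
    field_simp
    ring
  rw [intervalIntegral.integral_eq_sub_of_hasDerivAt_of_le zero_le_one hc hd]
  · simp [hG, Real.zero_rpow (by linarith : α - 1 ≠ 0), Real.zero_rpow hα0]
    field_simp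
    ring
  · rw [intervalIntegrable_iff_integrableOn_Ioc_of_le zero_le_one]
    refine intervalIntegral.integrableOn_deriv_of_nonneg hc hd fun y hy => ?_
    have h0 := hy.1
    have : 0 ≤ 1 - y ^ 2 := by nlinarith [hy.1, hy.2]
    have : 0 ≤ α - 1 := by linarith
    positivity

theorem isProbabilityMeasure_bergmanMeasure {α : ℝ} (hα : 1 < α) :
    IsProbabilityMeasure (bergmanMeasure α) := by
  have h := integral_one_bergmanMeasure hα
  rw [integral_const, smul_eq_mul, mul_one, Measure.real] at h
  exact ⟨(ENNReal.toReal_eq_one_iff _).1 h⟩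

theorem ae_norm_lt_one_bergmanMeasure (α : ℝ) : ∀ᵐ z ∂(bergmanMeasure α), ‖z‖ < 1 := by
  refine (withDensity_absolutelyContinuous _ _).ae_le ?_
  filter_upwards [ae_restrict_mem measurableSet_ball] with z hz
  simpa using hz

/-- The Bergman measure is rotation invariant. -/
theorem integral_bergmanMeasure_circle_mul {α : ℝ} (hα : 1 < α) (c : Circle) (g : ℂ → ℝ) :
    ∫ z, g (c * z) ∂(bergmanMeasure α) = ∫ z, g z ∂(bergmanMeasure α) := by
  rw [integral_bergmanMeasure hα, integral_bergmanMeasure hα,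
    ← integral_indicator measurableSet_ball, ← integral_indicator measurableSet_ball]
  refine Eq.trans ?_ ((rotation c).measurePreserving.integral_comp
    (rotation c).toHomeomorph.measurableEmbedding _)
  congr 1 with z
  have hc : ‖(c : ℂ) * z‖ = ‖z‖ := by rw [norm_mul, Circle.norm_coe, one_mul]
  simp only [indicator, rotation_apply, mem_ball_zero_iff, hc]

theorem integral_re_bergmanMeasure {α : ℝ} (hα : 1 < α) :
    ∫ z, z.re ∂(bergmanMeasure α) = 0 := by
  have h := integral_bergmanMeasure_circle_mul hα (-1) Complex.re
  simp only [Circle.coe_neg, Circle.coe_one, neg_mul, one_mul, Complex.neg_re, integral_neg] at h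
  linarith

theorem integrable_bergmanMeasure_of_bound {α : ℝ} (hα : 1 < α) {g : ℂ → ℝ} (hg : Continuous g)
    (C : ℝ) (hC : ∀ z, ‖z‖ < 1 → |g z| ≤ C) : Integrable g (bergmanMeasure α) := by
  have := isProbabilityMeasure_bergmanMeasure hα
  refine Integrable.of_bound hg.aestronglyMeasurable C ?_
  filter_upwards [ae_norm_lt_one_bergmanMeasure α] with z hz using hC z hz

theorem integral_re_sq_bergmanMeasure {α : ℝ} (hα : 1 < α) :
    ∫ z, z.re ^ 2 ∂(bergmanMeasure α) = 1 / (2 * α) := by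
  have h := integral_bergmanMeasure_circle_mul hα ⟨Complex.I, by simp [Submonoid.unitSphere]⟩
    fun z => z.re ^ 2
  simp only [Complex.mul_re, Complex.I_re, Complex.I_im, zero_mul, one_mul, zero_sub, neg_sq] at h
  have h2 := integral_norm_sq_bergmanMeasure hα
  have hre : Integrable (fun z : ℂ => z.re ^ 2) (bergmanMeasure α) := by
    refine integrable_bergmanMeasure_of_bound hα (by fun_prop) 1 fun z hz => ?_
    rw [abs_of_nonneg (sq_nonneg _), sq_le_one_iff_abs_le_one]
    exact (Complex.abs_re_le_norm z).trans hz.le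
  have him : Integrable (fun z : ℂ => z.im ^ 2) (bergmanMeasure α) := by
    refine integrable_bergmanMeasure_of_bound hα (by fun_prop) 1 fun z hz => ?_
    rw [abs_of_nonneg (sq_nonneg _), sq_le_one_iff_abs_le_one]
    exact (Complex.abs_im_le_norm z).trans hz.le
  simp_rw [Complex.sq_norm, Complex.normSq_apply, ← sq] at h2
  rw [integral_add hre him, h] at h2
  have : α ≠ 0 := by linarith
  field_simp at h2 ⊢
  linarith

theorem integrable_exp_re_bergmanMeasure {α : ℝ} (hα : 1 < α) (t : ℝ) :
    Integrable (fun z : ℂ => Real.exp (t * z.re)) (bergmanMeasure α) := by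
  refine integrable_bergmanMeasure_of_bound hα (by fun_prop) (Real.exp |t|) fun z hz => ?_
  rw [abs_of_pos (Real.exp_pos _), Real.exp_le_exp]
  calc t * z.re ≤ |t * z.re| := le_abs_self _
    _ = |t| * |z.re| := abs_mul _ _
    _ ≤ |t| * 1 := by gcongr; exact (Complex.abs_re_le_norm z).trans hz.le
    _ = |t| := mul_one _

/-- Second-order expansion of the moment generating function of `Re z` under the
Bergman measure. -/
theorem abs_integral_exp_re_bergmanMeasure_sub_le {α : ℝ} (hα : 1 < α) {t : ℝ} (ht : |t| ≤ 1) :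
    |∫ z, Real.exp (t * z.re) ∂(bergmanMeasure α) - (1 + t ^ 2 / (4 * α))| ≤ |t| ^ 3 := by
  have := isProbabilityMeasure_bergmanMeasure hα
  have hre : Integrable (fun z : ℂ => z.re) (bergmanMeasure α) :=
    integrable_bergmanMeasure_of_bound hα (by fun_prop) 1 fun z hz =>
      (Complex.abs_re_le_norm z).trans hz.le
  have hre2 : Integrable (fun z : ℂ => z.re ^ 2) (bergmanMeasure α) := by
    refine integrable_bergmanMeasure_of_bound hα (by fun_prop) 1 fun z hz => ?_
    rw [abs_of_nonneg (sq_nonneg _), sq_le_one_iff_abs_le_one]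
    exact (Complex.abs_re_le_norm z).trans hz.le
  have hlin : Integrable (fun z : ℂ => 1 + t * z.re) (bergmanMeasure α) :=
    (integrable_const 1).add (hre.const_mul t)
  have hpoly : Integrable (fun z : ℂ => 1 + t * z.re + t ^ 2 / 2 * z.re ^ 2)
      (bergmanMeasure α) :=
    hlin.add (hre2.const_mul _)
  have hval : ∫ z, (1 + t * z.re + t ^ 2 / 2 * z.re ^ 2) ∂(bergmanMeasure α)
      = 1 + t ^ 2 / (4 * α) := by
    rw [integral_add hlin (hre2.const_mul _),
      integral_add (integrable_const 1) (hre.const_mul t), integral_const_mul, integral_const_mul,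
      integral_re_bergmanMeasure hα, integral_re_sq_bergmanMeasure hα,
      integral_one_bergmanMeasure hα]
    ring
  rw [← hval, ← integral_sub (integrable_exp_re_bergmanMeasure hα t) hpoly]
  have hb : ∀ᵐ z ∂(bergmanMeasure α),
      ‖Real.exp (t * z.re) - (1 + t * z.re + t ^ 2 / 2 * z.re ^ 2)‖ ≤ |t| ^ 3 := by
    filter_upwards [ae_norm_lt_one_bergmanMeasure α] with z hz
    have hle : |t * z.re| ≤ |t| := by
      rw [abs_mul]
      exact mul_le_of_le_one_right (abs_nonneg t) ((Complex.abs_re_le_norm z).trans hz.le)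
    have h := Real.exp_bound (hle.trans ht) (n := 3) (by norm_num)
    simp only [Finset.sum_range_succ, Finset.sum_range_zero, Nat.factorial] at h
    have h3 : |t * z.re| ^ 3 ≤ |t| ^ 3 := by gcongr
    have h4 : 0 ≤ |t * z.re| ^ 3 := by positivity
    rw [Real.norm_eq_abs]
    calc _ = _ := by congr 1; push_cast; ring
      _ ≤ _ := h
      _ ≤ _ := by push_cast; linarith
  simpa using norm_integral_le_of_norm_le_const hb

/-- Integrals over the polydisc of functions of one variable. -/
theorem lintegral_bergmanMeasurePi_eval {n : ℕ} {α : ℝ} (hα : 1 < α) (i : Fin n) {g : ℂ → ENNReal}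
    (hg : Measurable g) :
    ∫⁻ z, g (z i) ∂(bergmanMeasurePi n α) = ∫⁻ z, g z ∂(bergmanMeasure α) := by
  have := isProbabilityMeasure_bergmanMeasure hα
  exact (measurePreserving_eval (fun _ : Fin n => bergmanMeasure α) i).lintegral_comp hg

theorem lintegral_exp_re_bergmanMeasure {α : ℝ} (hα : 1 < α) (t : ℝ) :
    ∫⁻ z, ENNReal.ofReal (Real.exp (t * z.re)) ∂(bergmanMeasure α) =
      ENNReal.ofReal (∫ z, Real.exp (t * z.re) ∂(bergmanMeasure α)) :=
  (ofReal_integral_eq_lintegral_ofReal (integrable_exp_re_bergmanMeasure hα t)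
    (Eventually.of_forall fun _ => (Real.exp_pos _).le)).symm

/-- The logarithm of the moment generating function of `Re z` is quadratic near the origin. -/
theorem tendsto_log_integral_exp_re_bergmanMeasure {α : ℝ} (hα : 1 < α) (c : ℝ) :
    Tendsto (fun ε : ℝ => Real.log (∫ z, Real.exp (c * ε * z.re) ∂(bergmanMeasure α)) / ε ^ 2)
      (𝓝[>] 0) (𝓝 (c ^ 2 / (4 * α))) := by
  have := isProbabilityMeasure_bergmanMeasure hα
  set M : ℝ → ℝ := fun ε => ∫ z, Real.exp (c * ε * z.re) ∂(bergmanMeasure α) with hM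
  have hMpos : ∀ ε, 0 < M ε := fun ε => integral_exp_pos (integrable_exp_re_bergmanMeasure hα _)
  have hid : Tendsto (fun ε : ℝ => ε) (𝓝[>] 0) (𝓝 0) := tendsto_id.mono_left nhdsWithin_le_nhds
  have hquot : Tendsto (fun ε => (M ε - 1) / ε ^ 2) (𝓝[>] 0) (𝓝 (c ^ 2 / (4 * α))) := by
    rw [tendsto_iff_norm_sub_tendsto_zero]
    have hsmall : ∀ᶠ ε in 𝓝[>] (0 : ℝ), |c * ε| < 1 := by
      have h : Tendsto (fun ε : ℝ => |c * ε|) (𝓝[>] 0) (𝓝 0) := by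
        simpa using (hid.const_mul c).abs
      exact h.eventually_lt_const one_pos
    refine squeeze_zero' (Eventually.of_forall fun _ => norm_nonneg _) ?_
      (by simpa using hid.const_mul (|c| ^ 3))
    filter_upwards [hsmall, self_mem_nhdsWithin] with ε hε hpos
    have hpos : 0 < ε := hpos
    have h := abs_integral_exp_re_bergmanMeasure_sub_le hα hε.le
    have e : (M ε - 1) / ε ^ 2 - c ^ 2 / (4 * α)
        = (M ε - (1 + (c * ε) ^ 2 / (4 * α))) / ε ^ 2 := by
      field_simp
      ring
    rw [e, Real.norm_eq_abs, abs_div, abs_of_pos (by positivity : 0 < ε ^ 2),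
      div_le_iff₀ (by positivity)]
    calc _ ≤ |c * ε| ^ 3 := h
      _ = |c| ^ 3 * ε * ε ^ 2 := by rw [abs_mul, abs_of_pos hpos]; ring
  have hone : Tendsto M (𝓝[>] 0) (𝓝 1) := by
    have h : Tendsto (fun ε => 1 + ε ^ 2 * ((M ε - 1) / ε ^ 2)) (𝓝[>] 0) (𝓝 1) := by
      simpa using ((hid.pow 2).mul hquot).const_add 1
    refine h.congr' ?_
    filter_upwards [self_mem_nhdsWithin] with ε hpos
    have : ε ≠ 0 := (show 0 < ε from hpos).ne'
    field_simp
    ring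
  refine tendsto_of_tendsto_of_tendsto_of_le_of_le
    (by simpa using hquot.div hone one_ne_zero) hquot (fun ε => ?_) fun ε => ?_
  · have h := Real.one_sub_inv_le_log_of_pos (hMpos ε)
    have e : (M ε - 1) / ε ^ 2 / M ε = (1 - (M ε)⁻¹) / ε ^ 2 := by
      rw [div_right_comm, sub_div, div_self (hMpos ε).ne', one_div]
    simp only [Pi.div_apply]
    rw [e]
    gcongr
  · have h := Real.log_le_sub_one_of_pos (hMpos ε)
    dsimp only
    gcongr

theorem norm_exp_ofReal_mul_rpow (t s : ℝ) (z : ℂ) :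
    ‖Complex.exp (t * z)‖ ^ s = Real.exp (s * t * z.re) := by
  rw [Complex.norm_exp, ← Real.exp_mul, Complex.re_ofReal_mul]
  ring_nf

/-- Necessity in Lemma 3.1: if `‖T_𝐫 f‖_{A_β^q(𝔻ⁿ)} ≤ ‖f‖_{A_α^p(𝔻ⁿ)}` holds for
every analytic `f` on the polydisc, then `rᵢ² ≤ βp/(αq)` for every `i`. -/
theorem polydisc_hypercontractive_necessity
    (n : ℕ) (hn : 0 < n)
    (α β p q : ℝ) (hα : 1 < α) (hβ : 1 < β) (hp : 0 < p) (hpq : p ≤ q)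
    (r : Fin n → ℝ) (hr0 : ∀ i, 0 ≤ r i) (hr1 : ∀ i, r i < 1)
    (H : ∀ f : (Fin n → ℂ) → ℂ,
      AnalyticOnNhd ℂ f {z : Fin n → ℂ | ∀ i, z i ∈ ball (0 : ℂ) 1} →
      (∫⁻ z, ENNReal.ofReal (‖f (fun i => (r i : ℂ) * z i)‖ ^ q)
          ∂(bergmanMeasurePi n β)) ^ (1 / q) ≤
        (∫⁻ z, ENNReal.ofReal (‖f z‖ ^ p) ∂(bergmanMeasurePi n α)) ^ (1 / p)) :
    ∀ i, (r i) ^ 2 ≤ β * p / (α * q) := by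
  intro i
  have hq : 0 < q := hp.trans_le hpq
  have hβP := isProbabilityMeasure_bergmanMeasure hβ
  have hαP := isProbabilityMeasure_bergmanMeasure hα
  have key : ∀ ε : ℝ,
      Real.log (∫ z, Real.exp (q * r i * ε * z.re) ∂(bergmanMeasure β)) / ε ^ 2 / q ≤
        Real.log (∫ z, Real.exp (p * ε * z.re) ∂(bergmanMeasure α)) / ε ^ 2 / p := by
    intro ε
    have hf : AnalyticOnNhd ℂ (fun z : Fin n → ℂ => Complex.exp ((ε : ℂ) * z i))
        {z : Fin n → ℂ | ∀ i, z i ∈ ball (0 : ℂ) 1} := fun z _ =>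
      (analyticAt_const.mul
        ((ContinuousLinearMap.proj (R := ℂ) (φ := fun _ : Fin n => ℂ) i).analyticAt z)).cexp
    have h := H _ hf
    have e : ∀ z : Fin n → ℂ, (ε : ℂ) * ((r i : ℂ) * z i) = ((r i * ε : ℝ) : ℂ) * z i := by
      intro z
      push_cast
      ring
    simp only [e, norm_exp_ofReal_mul_rpow] at h
    rw [lintegral_bergmanMeasurePi_eval hβ i
        (g := fun z => ENNReal.ofReal (Real.exp (q * (r i * ε) * z.re))) (by fun_prop),
      lintegral_bergmanMeasurePi_eval hα i
        (g := fun z => ENNReal.ofReal (Real.exp (p * ε * z.re))) (by fun_prop),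
      lintegral_exp_re_bergmanMeasure hβ, lintegral_exp_re_bergmanMeasure hα, ← mul_assoc] at h
    have hB := integral_exp_pos (integrable_exp_re_bergmanMeasure hβ (q * r i * ε))
    have hA := integral_exp_pos (integrable_exp_re_bergmanMeasure hα (p * ε))
    rw [ENNReal.ofReal_rpow_of_pos hB, ENNReal.ofReal_rpow_of_pos hA,
      ENNReal.ofReal_le_ofReal_iff (by positivity)] at h
    have h := Real.log_le_log (by positivity) h
    rw [Real.log_rpow hB, Real.log_rpow hA, one_div_mul_eq_div, one_div_mul_eq_div] at h
    rw [div_right_comm, div_right_comm _ _ p]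
    gcongr
  have hlim := le_of_tendsto_of_tendsto'
    ((tendsto_log_integral_exp_re_bergmanMeasure hβ (q * r i)).div_const q)
    ((tendsto_log_integral_exp_re_bergmanMeasure hα p).div_const p) key
  have hα0 : 0 < α := by linarith
  have hβ0 : 0 < β := by linarith
  have e1 : (q * r i) ^ 2 / (4 * β) / q = q * r i ^ 2 / (4 * β) := by field_simp
  have e2 : p ^ 2 / (4 * α) / p = p / (4 * α) := by field_simp
  rw [e1, e2, div_le_div_iff₀ (by positivity) (by positivity)] at hlim
  rw [le_div_iff₀ (by positivity)]
  linarith
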